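/- arXiv:1604.05433 — 2 statements merged into one kernel-verified Lean document; each statement's English description precedes it below -/
import Mathlib

section
/- For k ≥ 2 set λ_k = (log k + log log k)/2, a_k = 1/(k log k), ζ_k = −2^k, and let f(ξ) = Σ_{k=2}^∞ a_k e^{iλ_k(ξ − ζ_k)} e^{−(ξ − ζ_k)²}. Then there exist c > 0 and K such that |f(ξ)| ≥ c/(k log k) for every k ≥ K and every real ξ ∈ [ζ_k − 1, ζ_k + 1]; consequently ∫_{−∞}^0 |f(ξ)| dξ = +∞. -/
/-!
On the real line the oscillating factor has modulus one, so `‖fterm j ξ‖ = a_j e^{-(ξ - ζ_j)²}`.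
For `|ξ - ζ_k| ≤ 1` the `k`-th term has modulus at least `a_k / e`, while for `j ≠ k` the centre
`ζ_j` is at distance at least `2^(k-2) + 2^(j-2) - 1` from `ξ`; hence the sum of all other terms is
`O(e^{-2^(k-2)})`, which is negligible against `a_k = 1/(k log k)` (`eventually_tail_small`). This
is the lower bound `exists_lower_bound`, with `c = 1/(2e)`.

The windows `[ζ_k - 1, ζ_k + 1]` have length two and are pairwise disjoint for `k ≥ 2`, so the
integral dominates `2c ∑ 1/(k log k)`, which diverges by comparison with the telescoping differences
of `log log k` (`not_summable_one_div_mul_log`).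
-/


/-- `λ_k = (log k + log log k)/2`. -/
noncomputable def lamSeq (k : ℕ) : ℝ := (Real.log k + Real.log (Real.log k)) / 2

/-- `a_k = 1/(k log k)`. -/
noncomputable def aSeq (k : ℕ) : ℝ := 1 / (k * Real.log k)

/-- `ζ_k = -2^k`. -/
noncomputable def zSeq (k : ℕ) : ℝ := -(2:ℝ) ^ k

/-- The `k`-th term `a_k e^{iλ_k(ξ - ζ_k)} e^{-(ξ - ζ_k)²}` of the series defining `f`. -/
noncomputable def fterm (k : ℕ) (ξ : ℂ) : ℂ :=
  (aSeq k : ℂ) * Complex.exp (Complex.I * (lamSeq k : ℂ) * (ξ - (zSeq k : ℂ))) *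
    Complex.exp (-(ξ - (zSeq k : ℂ))^2)

open Filter Topology MeasureTheory

lemma norm_fterm (k : ℕ) (ξ : ℝ) :
    ‖fterm k (ξ : ℂ)‖ = |aSeq k| * Real.exp (-(ξ - zSeq k) ^ 2) := by
  have h1 : Complex.I * (lamSeq k : ℂ) * ((ξ : ℂ) - (zSeq k : ℂ))
      = ((lamSeq k * (ξ - zSeq k) : ℝ) : ℂ) * Complex.I := by push_cast; ring
  have h2 : -((ξ : ℂ) - (zSeq k : ℂ)) ^ 2 = ((-(ξ - zSeq k) ^ 2 : ℝ) : ℂ) := by push_cast; ring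
  rw [fterm, h1, h2, norm_mul, norm_mul, Complex.norm_exp_ofReal_mul_I, Complex.norm_real,
    ← Complex.ofReal_exp, Complex.norm_real, Real.norm_eq_abs, Real.norm_eq_abs, Real.abs_exp,
    mul_one]

lemma one_le_mul_log {k : ℕ} (hk : 2 ≤ k) : 1 ≤ k * Real.log k := by
  have h2 : (2 : ℝ) ≤ k := by exact_mod_cast hk
  have hl : Real.log 2 ≤ Real.log k := Real.log_le_log (by norm_num) h2
  have := Real.log_two_gt_d9
  nlinarith

lemma aSeq_mem {k : ℕ} (hk : 2 ≤ k) : 0 < aSeq k ∧ aSeq k ≤ 1 := by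
  have h := one_le_mul_log hk
  exact ⟨by unfold aSeq; positivity, by unfold aSeq; rw [div_le_one (by linarith)]; exact h⟩

/-- Separation of the centres: both `2^(n+1)` and `2^(m+1)` bound the gap from below, hence so does
their mean. -/
lemma two_pow_gap {m n : ℕ} (h : n ≠ m) :
    (2 : ℝ) ^ m + 2 ^ n ≤ |(2 : ℝ) ^ (n + 2) - 2 ^ (m + 2)| := by
  have hm : (0 : ℝ) < 2 ^ m := by positivity
  have hn : (0 : ℝ) < 2 ^ n := by positivity
  rcases lt_or_gt_of_ne h with h | h
  · have : (2 : ℝ) ^ (n + 1) ≤ 2 ^ m := pow_le_pow_right₀ (by norm_num) h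
    rw [abs_sub_comm]
    refine le_trans ?_ (le_abs_self _)
    simp only [pow_succ] at *
    linarith
  · have : (2 : ℝ) ^ (m + 1) ≤ 2 ^ n := pow_le_pow_right₀ (by norm_num) h
    refine le_trans ?_ (le_abs_self _)
    simp only [pow_succ] at *
    linarith

/-- Off-diagonal terms are doubly exponentially small; the bound factors into a function of the
window index and a summable function of the term index. -/
lemma norm_fterm_le {m n : ℕ} (h : n ≠ m) (hm : 1 ≤ m) {ξ : ℝ}
    (hξ : ξ ∈ Set.Icc (zSeq (m + 2) - 1) (zSeq (m + 2) + 1)) :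
    ‖fterm (n + 2) (ξ : ℂ)‖ ≤ Real.exp 1 * Real.exp (-2 ^ m) * Real.exp (-2 ^ n) := by
  obtain ⟨ha0, ha1⟩ := aSeq_mem (k := n + 2) (by omega)
  rw [norm_fterm, abs_of_pos ha0, ← Real.exp_add, ← Real.exp_add]
  refine le_trans (mul_le_of_le_one_left (Real.exp_pos _).le ha1) (Real.exp_le_exp.2 ?_)
  have hgap := two_pow_gap h
  have hm2 : (2 : ℝ) ≤ 2 ^ m := by simpa using pow_le_pow_right₀ (one_le_two (α := ℝ)) hm
  have hn1 : (1 : ℝ) ≤ 2 ^ n := one_le_pow₀ one_le_two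
  have hd : |ξ - zSeq (m + 2)| ≤ 1 := by
    rw [abs_le]; constructor <;> linarith [hξ.1, hξ.2]
  have htri : |(2 : ℝ) ^ (n + 2) - 2 ^ (m + 2)| ≤ |ξ - zSeq (n + 2)| + |ξ - zSeq (m + 2)| := by
    have : (2 : ℝ) ^ (n + 2) - 2 ^ (m + 2) = (ξ - zSeq (n + 2)) - (ξ - zSeq (m + 2)) := by
      simp only [zSeq]; ring
    rw [this]
    exact abs_sub _ _
  have : 1 ≤ |ξ - zSeq (n + 2)| := by linarith
  nlinarith [sq_abs (ξ - zSeq (n + 2))]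

lemma summable_exp_neg_two_pow : Summable fun n : ℕ => Real.exp (-2 ^ n) := by
  refine Summable.of_nonneg_of_le (fun n => (Real.exp_pos _).le) (fun n => ?_)
    summable_geometric_two
  rw [Real.exp_neg, one_div, inv_pow]
  gcongr
  linarith [Real.add_one_le_exp ((2 : ℝ) ^ n)]

lemma eventually_tail_small (C : ℝ) : ∀ᶠ k : ℕ in atTop,
    (k * Real.log k) * (C * Real.exp (-2 ^ (k - 2))) ≤ Real.exp (-1) / 2 := by
  have h0 : Tendsto (fun k : ℕ => (4 * |C|) * ((k : ℝ) ^ 2 * (1 / 2) ^ k)) atTop (𝓝 0) := by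
    simpa using (tendsto_pow_const_mul_const_pow_of_abs_lt_one 2
      (r := (1 / 2 : ℝ)) (by norm_num [abs_of_pos])).const_mul (4 * |C|)
  filter_upwards [h0.eventually_le_const (half_pos (Real.exp_pos (-1))), eventually_ge_atTop 2]
    with k hk hk2
  refine le_trans ?_ hk
  obtain ⟨m, rfl⟩ := Nat.exists_eq_add_of_le' hk2
  have hlog := Real.log_le_self (Nat.cast_nonneg (α := ℝ) (m + 2))
  have he : Real.exp (-2 ^ m) ≤ 4 * (1 / 2) ^ (m + 2) := by
    have : (4 : ℝ) * (1 / 2) ^ (m + 2) = ((2 : ℝ) ^ m)⁻¹ := by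
      rw [pow_add, one_div, inv_pow]; ring
    rw [this, Real.exp_neg]
    gcongr
    linarith [Real.add_one_le_exp ((2 : ℝ) ^ m)]
  have hl0 := Real.log_natCast_nonneg (m + 2)
  rw [Nat.add_sub_cancel]
  calc _ ≤ ((m + 2 : ℕ) * Real.log (m + 2 : ℕ)) * (|C| * Real.exp (-2 ^ m)) := by
        gcongr
        exact le_abs_self C
    _ ≤ ((m + 2 : ℕ) * ((m + 2 : ℕ) : ℝ)) * (|C| * (4 * (1 / 2) ^ (m + 2))) := by
        gcongr
    _ = _ := by ring

lemma exists_lower_bound : ∃ c > (0:ℝ), ∃ K : ℕ, ∀ k : ℕ, K ≤ k →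
      ∀ ξ : ℝ, ξ ∈ Set.Icc (zSeq k - 1) (zSeq k + 1) →
        c / (k * Real.log k) ≤ ‖∑' j : ℕ, fterm (j + 2) (ξ:ℂ)‖ := by
  obtain ⟨S, hS⟩ := summable_exp_neg_two_pow
  obtain ⟨K, hK⟩ := eventually_atTop.1 (eventually_tail_small (Real.exp 1 * S))
  refine ⟨Real.exp (-1) / 2, by positivity, max K 3, fun k hk ξ hξ => ?_⟩
  have hsmall := hK k (le_of_max_le_left hk)
  have hk3 : 3 ≤ k := le_of_max_le_right hk
  have hpos := one_le_mul_log (k := k) (by omega)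
  obtain ⟨m, rfl⟩ := Nat.exists_eq_add_of_le' (show 2 ≤ k by omega)
  rw [Nat.add_sub_cancel] at hsmall
  have hbound : ∀ n, ‖if n = m then 0 else fterm (n + 2) (ξ : ℂ)‖
      ≤ Real.exp 1 * Real.exp (-2 ^ m) * Real.exp (-2 ^ n) := by
    intro n
    split_ifs with h
    · rw [norm_zero]; positivity
    · exact norm_fterm_le h (by omega) hξ
  have hmaj := hS.mul_left (Real.exp 1 * Real.exp (-2 ^ m))
  have hrest := tsum_of_norm_bounded hmaj hbound
  have hsum : Summable fun n => if n = m then 0 else fterm (n + 2) (ξ : ℂ) :=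
    Summable.of_norm_bounded hmaj.summable hbound
  have hsplit := (hasSum_ite_eq m (fterm (m + 2) (ξ : ℂ))).add hsum.hasSum
  have hfun : (fun n => (if n = m then fterm (m + 2) (ξ : ℂ) else 0)
      + if n = m then 0 else fterm (n + 2) (ξ : ℂ)) = fun n => fterm (n + 2) (ξ : ℂ) := by
    funext n
    split_ifs with h
    · simp [h]
    · simp
  rw [hfun] at hsplit
  rw [hsplit.tsum_eq]
  have hmain : Real.exp (-1) / ((m + 2 : ℕ) * Real.log (m + 2 : ℕ)) ≤ ‖fterm (m + 2) (ξ : ℂ)‖ := by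
    rw [norm_fterm, abs_of_pos (aSeq_mem (by omega)).1, aSeq, div_eq_mul_one_div, mul_comm]
    gcongr
    nlinarith [hξ.1, hξ.2]
  have hrest' : Real.exp 1 * Real.exp (-2 ^ m) * S
      ≤ Real.exp (-1) / 2 / ((m + 2 : ℕ) * Real.log (m + 2 : ℕ)) := by
    rw [le_div_iff₀ (by linarith)]
    linarith
  have hhalf : Real.exp (-1) / ((m + 2 : ℕ) * Real.log (m + 2 : ℕ))
      = 2 * (Real.exp (-1) / 2 / ((m + 2 : ℕ) * Real.log (m + 2 : ℕ))) := by ring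
  have := norm_sub_le_norm_add (fterm (m + 2) (ξ : ℂ))
    (∑' n, if n = m then 0 else fterm (n + 2) (ξ : ℂ))
  linarith

lemma not_summable_one_div_mul_log :
    ¬ Summable fun n : ℕ => 1 / (((n + 2 : ℕ) : ℝ) * Real.log (n + 2 : ℕ)) := by
  intro hs
  have hstep : ∀ n : ℕ, Real.log (Real.log (n + 1 + 2 : ℕ)) - Real.log (Real.log (n + 2 : ℕ))
      ≤ 1 / (((n + 2 : ℕ) : ℝ) * Real.log (n + 2 : ℕ)) := by
    intro n
    have hx : (0 : ℝ) < (n + 2 : ℕ) := by positivity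
    have hl : 0 < Real.log (n + 2 : ℕ) := Real.log_pos (by exact_mod_cast (by omega : 1 < n + 2))
    have hl' : 0 < Real.log (n + 1 + 2 : ℕ) :=
      Real.log_pos (by exact_mod_cast (by omega : 1 < n + 1 + 2))
    -- `log t ≤ t - 1`, applied to the ratio of consecutive logarithms and of consecutive integers
    have h1 := Real.log_le_sub_one_of_pos (div_pos hl' hl)
    have hx' : (0 : ℝ) < (n + 1 + 2 : ℕ) := by positivity
    have h2 := Real.log_le_sub_one_of_pos (div_pos hx' hx)
    rw [Real.log_div hl'.ne' hl.ne'] at h1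
    rw [Real.log_div hx'.ne' hx.ne'] at h2
    refine h1.trans ?_
    rw [div_sub_one hl.ne', ← div_div]
    gcongr
    refine h2.trans_eq ?_
    rw [div_sub_one hx.ne']
    push_cast
    ring
  have hbdd : ∀ N : ℕ, Real.log (Real.log (N + 2 : ℕ)) ≤
      (∑' n : ℕ, 1 / (((n + 2 : ℕ) : ℝ) * Real.log (n + 2 : ℕ)))
        + Real.log (Real.log (0 + 2 : ℕ)) := by
    intro N
    have h1 := Finset.sum_range_sub (fun n : ℕ => Real.log (Real.log (n + 2 : ℕ))) N
    have h2 := Finset.sum_le_sum (s := Finset.range N) fun n _ => hstep n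
    have h3 := hs.sum_le_tsum (Finset.range N) fun n _ => by positivity
    exact sub_le_iff_le_add.1 (h1.symm.trans_le (h2.trans h3))
  have hlim : Tendsto (fun N : ℕ => Real.log (Real.log (N + 2 : ℕ))) atTop atTop :=
    Real.tendsto_log_atTop.comp <| Real.tendsto_log_atTop.comp <|
      tendsto_natCast_atTop_atTop.comp <| tendsto_add_atTop_nat 2
  obtain ⟨N, hN⟩ := (hlim.eventually_gt_atTop _).exists
  exact absurd (hbdd N) (not_le.2 hN)

/-- Consecutive centres are at distance at least `4 > 2` once `k ≥ 2`. -/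
lemma pairwise_disjoint_windows {K : ℕ} (hK : 2 ≤ K) : Pairwise (Function.onFun Disjoint
    fun n : ℕ => Set.Icc (zSeq (n + K) - 1) (zSeq (n + K) + 1)) := by
  rw [pairwise_disjoint_on]
  intro m n hmn
  rw [Set.disjoint_left]
  rintro x ⟨h1, _⟩ ⟨_, h2⟩
  have h3 : (2 : ℝ) ^ (m + K + 1) ≤ 2 ^ (n + K) := pow_le_pow_right₀ one_le_two (by omega)
  have h4 : (2 : ℝ) ^ 2 ≤ 2 ^ (m + K) := pow_le_pow_right₀ one_le_two (by omega)
  rw [pow_succ] at h3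
  simp only [zSeq] at h1 h2
  linarith

/-- `f(ξ) = Σ_{k≥2} a_k e^{iλ_k(ξ-ζ_k)} e^{-(ξ-ζ_k)²}` satisfies
`|f(ξ)| ≥ c/(k log k)` on `[ζ_k - 1, ζ_k + 1]` for all large `k`, hence
`∫_{-∞}^0 |f| = ∞`. -/
theorem series_lower_bound_and_divergence :
    (∃ c > (0:ℝ), ∃ K : ℕ, ∀ k : ℕ, K ≤ k →
      ∀ ξ : ℝ, ξ ∈ Set.Icc (zSeq k - 1) (zSeq k + 1) →
        c / (k * Real.log k) ≤ ‖∑' j : ℕ, fterm (j + 2) (ξ:ℂ)‖) ∧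
    (∫⁻ ξ in Set.Iio (0:ℝ), (‖∑' j : ℕ, fterm (j + 2) (ξ:ℂ)‖₊ : ENNReal)) = ⊤ := by
  refine ⟨exists_lower_bound, ?_⟩
  obtain ⟨c, hc, K, hK⟩ := exists_lower_bound
  set W : ℕ → Set ℝ := fun n => Set.Icc (zSeq (n + (K + 2)) - 1) (zSeq (n + (K + 2)) + 1) with hW
  have hsub : (⋃ n, W n) ⊆ Set.Iio 0 := by
    refine Set.iUnion_subset fun n x hx => ?_
    have h4 : (2 : ℝ) ^ 2 ≤ 2 ^ (n + (K + 2)) := pow_le_pow_right₀ one_le_two (by omega)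
    have := hx.2
    simp only [zSeq] at this
    rw [Set.mem_Iio]
    linarith
  have hterm : ∀ n : ℕ,
      ENNReal.ofReal (c / ((n + (K + 2) : ℕ) * Real.log (n + (K + 2) : ℕ)))
        ≤ ∫⁻ ξ in W n, (‖∑' j : ℕ, fterm (j + 2) (ξ:ℂ)‖₊ : ENNReal) := by
    intro n
    set b := ENNReal.ofReal (c / ((n + (K + 2) : ℕ) * Real.log (n + (K + 2) : ℕ)))
    calc b ≤ b * volume (W n) := by
          refine le_mul_of_one_le_right' ?_
          rw [hW, Real.volume_Icc, ENNReal.one_le_ofReal]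
          linarith
      _ = ∫⁻ _ in W n, b := (setLIntegral_const _ _).symm
      _ ≤ _ := setLIntegral_mono' measurableSet_Icc fun ξ hξ => by
          rw [← enorm_eq_nnnorm, ← ofReal_norm]
          exact ENNReal.ofReal_le_ofReal (hK _ (by omega) ξ hξ)
  have hdiv : ∑' n : ℕ,
      ENNReal.ofReal (c / ((n + (K + 2) : ℕ) * Real.log (n + (K + 2) : ℕ))) = ⊤ := by
    by_contra hne
    have hs := ENNReal.summable_toReal hne
    refine not_summable_one_div_mul_log ((summable_nat_add_iff K).1 ?_)
    refine (hs.mul_left c⁻¹).congr fun n => ?_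
    have hl := Real.log_natCast_nonneg (n + (K + 2))
    rw [ENNReal.toReal_ofReal (by positivity), ← mul_div_assoc, inv_mul_cancel₀ hc.ne', add_assoc]
  rw [← top_le_iff, ← hdiv]
  calc _ ≤ ∑' n, ∫⁻ ξ in W n, (‖∑' j : ℕ, fterm (j + 2) (ξ:ℂ)‖₊ : ENNReal) :=
        ENNReal.tsum_le_tsum hterm
    _ = ∫⁻ ξ in ⋃ n, W n, (‖∑' j : ℕ, fterm (j + 2) (ξ:ℂ)‖₊ : ENNReal) :=
        (lintegral_iUnion (fun _ => measurableSet_Icc)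
          (pairwise_disjoint_windows (by omega)) _).symm
    _ ≤ _ := lintegral_mono_set hsub
end

section
/- Let Ω = {x + iy ∈ ℂ : x < log(2 cos y), |y| < π/2}. There is a constant C such that for every λ ≥ 1, every real ζ₀, every ζ < 0, and every analytic function h on Ω with |h(ξ)| ≤ 1 for all ξ ∈ Ω, one has |∫_ζ^0 e^{iλ(ξ − ζ₀)} e^{−(ξ − ζ₀)²} h(ξ) dξ| ≤ C/λ, the integral taken over the real segment [ζ, 0]. -/
/-!
The integrand is holomorphic in `ξ`, and the rectangle `[ζ, 0] × [0, 1/2]` lies in `Ω` because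
`2 cos y > 1` for `|y| ≤ 1/2`. By Cauchy's theorem the segment `[ζ, 0]` may be pushed up to
height `1/2`. At `x + iy` in the rectangle the integrand has norm at most
`e^{1/4} e^{-λy} e^{-(x-ζ₀)²}` (`norm_integrand_le`). Each vertical side therefore contributes at
most `e^{1/4} ∫₀^{1/2} e^{-λy} dy ≤ e^{1/4}/λ`, and the top side at most
`e^{1/4} e^{-λ/2} √π ≤ 2 e^{1/4} √π / λ`, uniformly in `ζ` and `ζ₀`.
-/

/-- The domain `Ω = {x + iy : x < log(2 cos y), |y| < π/2}`. -/
noncomputable def OmegaDom : Set ℂ :=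
  {z : ℂ | z.re < Real.log (2 * Real.cos z.im) ∧ |z.im| < Real.pi / 2}

theorem mem_OmegaDom_of_rect {z : ℂ} (hx : z.re ≤ 0) (hy0 : 0 ≤ z.im) (hy : z.im ≤ 1 / 2) :
    z ∈ OmegaDom := by
  have hcos : 1 < 2 * Real.cos z.im := by
    have := Real.one_sub_sq_div_two_le_cos (x := z.im)
    nlinarith
  refine ⟨hx.trans_lt (Real.log_pos hcos), ?_⟩
  rw [abs_of_nonneg hy0]
  linarith [Real.pi_gt_three]

theorem norm_integrand_le {h : ℂ → ℂ} (hb : ∀ z ∈ OmegaDom, ‖h z‖ ≤ 1) (lam c : ℝ) {z : ℂ}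
    (hx : z.re ≤ 0) (hy0 : 0 ≤ z.im) (hy : z.im ≤ 1 / 2) :
    ‖Complex.exp (Complex.I * (lam : ℂ) * (z - (c : ℂ))) * Complex.exp (-(z - (c : ℂ)) ^ 2) * h z‖
      ≤ Real.exp (1 / 4) * Real.exp (-lam * z.im) * Real.exp (-(z.re - c) ^ 2) := by
  have h1 : (Complex.I * (lam : ℂ) * (z - (c : ℂ))).re = -lam * z.im := by simp
  have h2 : (-(z - (c : ℂ)) ^ 2).re = -(z.re - c) ^ 2 + z.im ^ 2 := by
    simp [pow_two]
    ring
  rw [norm_mul, norm_mul, Complex.norm_exp, Complex.norm_exp, h1, h2]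
  have h3 : Real.exp (-(z.re - c) ^ 2 + z.im ^ 2) ≤
      Real.exp (1 / 4) * Real.exp (-(z.re - c) ^ 2) := by
    rw [← Real.exp_add]
    apply Real.exp_le_exp.2
    nlinarith
  calc _ ≤ Real.exp (-lam * z.im) * (Real.exp (1 / 4) * Real.exp (-(z.re - c) ^ 2)) * 1 := by
        gcongr
        exact hb z (mem_OmegaDom_of_rect hx hy0 hy)
    _ = _ := by ring

theorem integral_exp_neg_le {lam : ℝ} (hl : 0 < lam) :
    ∫ y in (0 : ℝ)..(1 / 2), Real.exp (1 / 4) * Real.exp (-lam * y) ≤ Real.exp (1 / 4) / lam := by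
  have hderiv : ∀ y ∈ Set.uIcc (0 : ℝ) (1 / 2),
      HasDerivAt (fun y => -(Real.exp (-lam * y) / lam)) (Real.exp (-lam * y)) y := by
    intro y _
    have h1 : HasDerivAt (fun y : ℝ => -lam * y) (-lam) y := by
      simpa using (hasDerivAt_id y).const_mul (-lam)
    refine (h1.exp.div_const lam).neg.congr_deriv ?_
    field_simp
  rw [intervalIntegral.integral_const_mul, intervalIntegral.integral_eq_sub_of_hasDerivAt hderiv
    (Continuous.intervalIntegrable (by fun_prop) _ _), div_eq_mul_inv]
  refine mul_le_mul_of_nonneg_left ?_ (Real.exp_pos _).le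
  have : 0 < Real.exp (-lam * (1 / 2)) / lam := by positivity
  simp only [mul_zero, Real.exp_zero, one_div] at this ⊢
  linarith

theorem integral_gaussian_le {a : ℝ} (ha : a ≤ 0) (c : ℝ) :
    ∫ x in a..(0 : ℝ), Real.exp (-(x - c) ^ 2) ≤ √Real.pi := by
  have hint : MeasureTheory.Integrable (fun x : ℝ => Real.exp (-(x - c) ^ 2)) := by
    simpa using (integrable_exp_neg_mul_sq one_pos).comp_sub_right c
  have htot : ∫ x : ℝ, Real.exp (-(x - c) ^ 2) = √Real.pi := by
    rw [MeasureTheory.integral_sub_right_eq_self (fun x : ℝ => Real.exp (-x ^ 2)) c]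
    simpa using integral_gaussian 1
  rw [intervalIntegral.integral_of_le ha, ← htot]
  exact MeasureTheory.setIntegral_le_integral hint
    (Filter.Eventually.of_forall fun x => (Real.exp_pos _).le)

/-- Oscillatory-integral estimate: uniformly over `λ ≥ 1`, real centers `ζ₀`, endpoints
`ζ < 0` and `h ∈ H^∞(Ω)` with `|h| ≤ 1`, one has
`|∫_ζ^0 e^{iλ(ξ-ζ₀)} e^{-(ξ-ζ₀)²} h(ξ) dξ| ≤ C/λ`. -/
theorem oscillatory_integral_bound :
    ∃ C : ℝ, ∀ lam : ℝ, 1 ≤ lam → ∀ ζ₀ : ℝ, ∀ ζ : ℝ, ζ < 0 →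
      ∀ h : ℂ → ℂ, DifferentiableOn ℂ h OmegaDom → (∀ z ∈ OmegaDom, ‖h z‖ ≤ 1) →
      ‖∫ ξ in ζ..(0:ℝ), Complex.exp (Complex.I * (lam:ℂ) * ((ξ:ℂ) - (ζ₀:ℂ))) *
          Complex.exp (-((ξ:ℂ) - (ζ₀:ℂ))^2) * h (ξ:ℂ)‖ ≤ C / lam := by
  refine ⟨Real.exp (1 / 4) * (2 + 2 * √Real.pi), ?_⟩
  intro lam hlam c ζ hζ h hd hb
  have hl : 0 < lam := by linarith
  set f : ℂ → ℂ := fun z => Complex.exp (Complex.I * (lam : ℂ) * (z - (c : ℂ))) *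
    Complex.exp (-(z - (c : ℂ)) ^ 2) * h z with hf
  have hfb : ∀ x y : ℝ, x ≤ 0 → 0 ≤ y → y ≤ 1 / 2 → ‖f (x + y * Complex.I)‖ ≤
      Real.exp (1 / 4) * Real.exp (-lam * y) * Real.exp (-(x - c) ^ 2) := by
    intro x y hx hy0 hy
    have := norm_integrand_le hb lam c (z := x + y * Complex.I) (by simpa using hx)
      (by simpa using hy0) (by simpa using hy)
    simpa [hf] using this
  have hfd : DifferentiableOn ℂ f OmegaDom := by
    refine DifferentiableOn.mul ?_ hd
    fun_prop
  have hvert : ∀ x : ℝ, x ≤ 0 →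
      ‖∫ y in (0 : ℝ)..(1 / 2), f (x + y * Complex.I)‖ ≤ Real.exp (1 / 4) / lam := by
    intro x hx
    refine le_trans ?_ (integral_exp_neg_le hl)
    refine intervalIntegral.norm_integral_le_of_norm_le (by norm_num)
      (Filter.Eventually.of_forall fun y hy => ?_)
      (Continuous.intervalIntegrable (by fun_prop) _ _)
    refine (hfb x y hx hy.1.le hy.2).trans (mul_le_of_le_one_right (by positivity) ?_)
    exact Real.exp_le_one_iff.2 (by nlinarith [sq_nonneg (x - c)])
  have htop : ‖∫ x in ζ..(0 : ℝ), f (x + (1 / 2 : ℝ) * Complex.I)‖ ≤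
      Real.exp (1 / 4) * (2 * √Real.pi) / lam := by
    -- `e^{-λ/2} ≤ 2/λ` comes from `λ/2 ≤ e^{λ/2}`.
    have hexp : Real.exp (-lam * (1 / 2)) ≤ 2 / lam := by
      rw [le_div_iff₀ hl]
      have h1 := Real.add_one_le_exp (lam * (1 / 2))
      have h2 : Real.exp (-lam * (1 / 2)) * Real.exp (lam * (1 / 2)) = 1 := by
        rw [← Real.exp_add]; simp
      nlinarith [Real.exp_pos (-lam * (1 / 2))]
    calc _ ≤ ∫ x in ζ..(0 : ℝ),
          Real.exp (1 / 4) * Real.exp (-lam * (1 / 2)) * Real.exp (-(x - c) ^ 2) :=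
          intervalIntegral.norm_integral_le_of_norm_le hζ.le
            (Filter.Eventually.of_forall fun x hx =>
              hfb x (1 / 2) hx.2 (by norm_num) le_rfl)
            (Continuous.intervalIntegrable (by fun_prop) _ _)
      _ = Real.exp (1 / 4) * Real.exp (-lam * (1 / 2)) *
          ∫ x in ζ..(0 : ℝ), Real.exp (-(x - c) ^ 2) := intervalIntegral.integral_const_mul _ _
      _ ≤ Real.exp (1 / 4) * (2 / lam) * √Real.pi := by
          exact mul_le_mul (by gcongr) (integral_gaussian_le hζ.le c)
            (intervalIntegral.integral_nonneg hζ.le fun x _ => (Real.exp_pos _).le)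
            (by positivity)
      _ = _ := by ring
  have hrect := Complex.integral_boundary_rect_eq_zero_of_differentiableOn f (ζ : ℂ)
    ((0 : ℝ) + (1 / 2 : ℝ) * Complex.I) (hfd.mono (by
      intro z hz
      rw [Complex.mem_reProdIm] at hz
      simp only [Complex.ofReal_re, Complex.ofReal_im, Complex.add_re, Complex.add_im,
        Complex.re_ofReal_mul, Complex.im_ofReal_mul, Complex.I_re, Complex.I_im, mul_zero,
        mul_one, add_zero, zero_add] at hz
      rw [Set.uIcc_of_le hζ.le, Set.uIcc_of_le (by norm_num)] at hz
      exact mem_OmegaDom_of_rect hz.1.2 hz.2.1 hz.2.2))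
  simp only [Complex.ofReal_re, Complex.ofReal_im,
    Complex.re_ofReal_mul, Complex.im_ofReal_mul, Complex.I_re, Complex.I_im, mul_zero,
    mul_one, add_zero, zero_add, Complex.ofReal_zero, zero_mul, smul_eq_mul] at hrect
  have hright := hvert 0 le_rfl
  simp only [Complex.ofReal_zero, zero_add] at hright
  have hleft := hvert ζ hζ.le
  have key : ∫ x in ζ..(0 : ℝ), f x = (∫ x in ζ..(0 : ℝ), f (x + (1 / 2 : ℝ) * Complex.I)) -
      Complex.I * (∫ y in (0 : ℝ)..(1 / 2), f (y * Complex.I)) +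
      Complex.I * ∫ y in (0 : ℝ)..(1 / 2), f (ζ + y * Complex.I) := by
    linear_combination hrect
  change ‖∫ x in ζ..(0 : ℝ), f x‖ ≤ _
  rw [key]
  calc _ ≤ _ := norm_add_le_of_le (norm_sub_le _ _) le_rfl
    _ ≤ Real.exp (1 / 4) * (2 * √Real.pi) / lam + Real.exp (1 / 4) / lam +
        Real.exp (1 / 4) / lam := by
      rw [norm_mul, norm_mul, Complex.norm_I, one_mul, one_mul]
      gcongr
    _ = _ := by ring
end
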